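/- arXiv:math/0506436 — 6 statements merged into one kernel-verified Lean document; each statement's English description precedes it below -/
import Mathlib

section
/- Let X ⊆ ℝⁿ be open, M = {x ∈ X : x' = 0}, and let Λ be a closed conic subset of X × ℝⁿ. Then j_d j_π^{−1}(Λ +̂ T*_M X) = j^#(Λ); that is, a pair (x''₀; ξ''₀) with (0,x''₀) ∈ M admits some ξ'₀ ∈ ℝ^d with (0, x''₀; ξ'₀, ξ''₀) ∈ Λ +̂ T*_M X if and only if there exists a sequence (x'ₙ, x''ₙ; ξ'ₙ, ξ''ₙ) in Λ with (x''ₙ; ξ''ₙ) → (x''₀; ξ''₀), x'ₙ → 0 and |x'ₙ| |(ξ'ₙ, ξ''ₙ)| → 0. (Lemma 3.2 of the paper, with both sides written via their sequence descriptions.) -/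
open Filter Topology

/-- ℝⁿ split as ℝ^d × ℝ^{n-d}, with coordinates `x = (x', x'')`. -/
abbrev Pt (d e : ℕ) : Type := EuclideanSpace ℝ (Fin d) × EuclideanSpace ℝ (Fin e)

/-- The operation `A +̂ B` on closed conic subsets of `T*X = X × ℝⁿ`:
`(x₀; ξ₀) ∈ X × ℝⁿ` belongs to `A +̂ B` iff there are sequences `(xₙ; ξₙ)` in `A` and
`(yₙ; ηₙ)` in `B` with `xₙ → x₀`, `yₙ → x₀`, `ξₙ + ηₙ → ξ₀` and `|xₙ - yₙ| |ξₙ| → 0`. -/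
def hatSum {V : Type*} [NormedAddCommGroup V] (X : Set V) (A B : Set (V × V)) :
    Set (V × V) :=
  {p | p.1 ∈ X ∧ ∃ x ξ y η : ℕ → V,
    (∀ n, (x n, ξ n) ∈ A) ∧ (∀ n, (y n, η n) ∈ B) ∧
    Tendsto x atTop (nhds p.1) ∧ Tendsto y atTop (nhds p.1) ∧
    Tendsto (fun n => ξ n + η n) atTop (nhds p.2) ∧
    Tendsto (fun n => ‖x n - y n‖ * ‖ξ n‖) atTop (nhds (0 : ℝ))}

/-- A subset of `X × ℝⁿ` is conic: stable under positive scalings of the covector. -/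
def IsConic {V : Type*} [NormedAddCommGroup V] [NormedSpace ℝ V] (A : Set (V × V)) : Prop :=
  ∀ p ∈ A, ∀ lam : ℝ, 0 < lam → (p.1, lam • p.2) ∈ A

/-- `T*_M X = {(0, x''; ξ', 0) : (0, x'') ∈ X, ξ' ∈ ℝ^d}` where `M = {x ∈ X : x' = 0}`. -/
def conormalM {d e : ℕ} (X : Set (Pt d e)) : Set (Pt d e × Pt d e) :=
  {p | p.1.1 = 0 ∧ p.1 ∈ X ∧ p.2.2 = 0}

/-- `j^#(Λ)`: the set of `(x''₀; ξ''₀)` with `(0, x''₀) ∈ M` for which there is a sequence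
`(x'ₙ, x''ₙ; ξ'ₙ, ξ''ₙ)` in `Λ` with `(x''ₙ; ξ''ₙ) → (x''₀; ξ''₀)`, `x'ₙ → 0` and
`|x'ₙ| |(ξ'ₙ, ξ''ₙ)| → 0`. -/
def jSharp {d e : ℕ} (X : Set (Pt d e)) (Λ : Set (Pt d e × Pt d e)) :
    Set (EuclideanSpace ℝ (Fin e) × EuclideanSpace ℝ (Fin e)) :=
  {q | ((0 : EuclideanSpace ℝ (Fin d)), q.1) ∈ X ∧
    ∃ (x' : ℕ → EuclideanSpace ℝ (Fin d)) (x'' : ℕ → EuclideanSpace ℝ (Fin e))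
      (ξ' : ℕ → EuclideanSpace ℝ (Fin d)) (ξ'' : ℕ → EuclideanSpace ℝ (Fin e)),
      (∀ n, ((x' n, x'' n), (ξ' n, ξ'' n)) ∈ Λ) ∧
      Tendsto (fun n => (x'' n, ξ'' n)) atTop (nhds q) ∧
      Tendsto x' atTop (nhds (0 : EuclideanSpace ℝ (Fin d))) ∧
      Tendsto (fun n => ‖x' n‖ * ‖((ξ' n, ξ'' n) : Pt d e)‖) atTop (nhds (0 : ℝ))}

/-- `j_d j_π^{-1}(A) = {(x''; ξ'') : (0, x'') ∈ M, ∃ ξ', (0, x''; ξ', ξ'') ∈ A}`. -/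
def jdjpi {d e : ℕ} (X : Set (Pt d e)) (A : Set (Pt d e × Pt d e)) :
    Set (EuclideanSpace ℝ (Fin e) × EuclideanSpace ℝ (Fin e)) :=
  {q | ((0 : EuclideanSpace ℝ (Fin d)), q.1) ∈ X ∧
    ∃ ξ' : EuclideanSpace ℝ (Fin d),
      (((0 : EuclideanSpace ℝ (Fin d)), q.1), (ξ', q.2)) ∈ A}

/-!
The conormal covectors `(η', 0)` over `M` leave `ξ''` unchanged in a sum and have arbitrary `η'`.
So in `Λ +̂ T*_M X` only the convergence of `ξ''` is a real constraint: given a sequence in `Λ`, the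
choice `η' = -ξ'` makes the first component of the sum vanish. Among the points `y` of `M`, the
projection `(0, x'')` is nearest to `x = (x', x'')`, at distance `|x'|`, so the two conditions
`|x - y| |ξ| → 0` and `|x'| |ξ| → 0` correspond.
-/

section ProductNorm

variable {E F : Type*} [SeminormedAddCommGroup E] [SeminormedAddCommGroup F]

lemma norm_fst_le_norm_sub_of_fst_eq_zero (x : E × F) {y : E × F} (hy : y.1 = 0) :
    ‖x.1‖ ≤ ‖x - y‖ := by
  simpa only [Prod.fst_sub, hy, sub_zero] using norm_fst_le (x - y)

lemma norm_sub_zero_prodMk_snd (x : E × F) : ‖x - (0, x.2)‖ = ‖x.1‖ := by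
  simp [Prod.norm_def]

end ProductNorm

lemma mem_hatSum_of_eventually_mem {V : Type*} [NormedAddCommGroup V] {X : Set V}
    {A B : Set (V × V)} {p : V × V} {x ξ y η : ℕ → V} (hp : p.1 ∈ X)
    (hA : ∀ᶠ n in atTop, (x n, ξ n) ∈ A) (hB : ∀ᶠ n in atTop, (y n, η n) ∈ B)
    (hx : Tendsto x atTop (𝓝 p.1)) (hy : Tendsto y atTop (𝓝 p.1))
    (hsum : Tendsto (fun n => ξ n + η n) atTop (𝓝 p.2))
    (hprod : Tendsto (fun n => ‖x n - y n‖ * ‖ξ n‖) atTop (𝓝 0)) :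
    p ∈ hatSum X A B := by
  obtain ⟨N, hN⟩ := eventually_atTop.1 (hA.and hB)
  have hshift : Tendsto (· + N) atTop atTop := tendsto_add_atTop_nat N
  exact ⟨hp, fun n => x (n + N), fun n => ξ (n + N), fun n => y (n + N), fun n => η (n + N),
    fun n => (hN _ (Nat.le_add_left N n)).1, fun n => (hN _ (Nat.le_add_left N n)).2,
    hx.comp hshift, hy.comp hshift, hsum.comp hshift, hprod.comp hshift⟩

section Restriction

variable {d e : ℕ} {X : Set (Pt d e)} {Λ : Set (Pt d e × Pt d e)}

lemma snd_add_eq_of_mem_conormalM (ξ : Pt d e) {y η : Pt d e} (h : (y, η) ∈ conormalM X) :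
    (ξ + η).2 = ξ.2 := by
  have hη : η.2 = 0 := h.2.2
  rw [Prod.snd_add, hη, add_zero]

lemma jdjpi_hatSum_conormalM_subset_jSharp :
    jdjpi X (hatSum X Λ (conormalM X)) ⊆ jSharp X Λ := by
  rintro q ⟨hq, _, -, x, ξ, y, η, hΛ, hconormal, hx, -, hsum, hprod⟩
  have hξ'' : Tendsto (fun n => (ξ n).2) atTop (𝓝 q.2) :=
    hsum.snd_nhds.congr fun n => snd_add_eq_of_mem_conormalM (ξ n) (hconormal n)
  have hprod' : Tendsto (fun n => ‖(x n).1‖ * ‖ξ n‖) atTop (𝓝 0) := by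
    refine squeeze_zero (fun n => by positivity) (fun n => ?_) hprod
    gcongr
    exact norm_fst_le_norm_sub_of_fst_eq_zero (x n) (hconormal n).1
  exact ⟨hq, fun n => (x n).1, fun n => (x n).2, fun n => (ξ n).1, fun n => (ξ n).2,
    hΛ, hx.snd_nhds.prodMk_nhds hξ'', hx.fst_nhds, hprod'⟩

lemma jSharp_subset_jdjpi_hatSum_conormalM
    (hM : IsOpen {x'' | ((0 : EuclideanSpace ℝ (Fin d)), x'') ∈ X}) :
    jSharp X Λ ⊆ jdjpi X (hatSum X Λ (conormalM X)) := by
  rintro q ⟨hq, x', x'', ξ', ξ'', hΛ, hq_lim, hx', hprod⟩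
  have hx'' : Tendsto x'' atTop (𝓝 q.1) := hq_lim.fst_nhds
  have hconormal : ∀ᶠ n in atTop, ((0, x'' n), (-ξ' n, 0)) ∈ conormalM X :=
    (hx''.eventually_mem (hM.mem_nhds hq)).mono fun n hn => ⟨rfl, hn, rfl⟩
  have hsum : Tendsto (fun n => ((ξ' n, ξ'' n) + (-ξ' n, 0) : Pt d e)) atTop (𝓝 (0, q.2)) := by
    simpa only [Prod.mk_add_mk, add_neg_cancel, add_zero] using
      tendsto_const_nhds.prodMk_nhds hq_lim.snd_nhds
  refine ⟨hq, 0, mem_hatSum_of_eventually_mem hq (.of_forall hΛ) hconormal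
    (hx'.prodMk_nhds hx'') (tendsto_const_nhds.prodMk_nhds hx'') hsum ?_⟩
  simpa only [norm_sub_zero_prodMk_snd (x' _, x'' _)] using hprod

end Restriction

theorem stmt0_general {d e : ℕ} (X : Set (Pt d e))
    (hM : IsOpen {x'' | ((0 : EuclideanSpace ℝ (Fin d)), x'') ∈ X})
    (Λ : Set (Pt d e × Pt d e)) :
    jdjpi X (hatSum X Λ (conormalM X)) = jSharp X Λ :=
  jdjpi_hatSum_conormalM_subset_jSharp.antisymm (jSharp_subset_jdjpi_hatSum_conormalM hM)

/-- **Lemma 3.2.** For a closed conic subset `Λ` of `X × ℝⁿ`,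
`j_d j_π^{-1}(Λ +̂ T*_M X) = j^#(Λ)`. -/
theorem stmt0 {d e : ℕ} (hd : 1 ≤ d) (he : 1 ≤ e)
    (X : Set (Pt d e)) (hX : IsOpen X)
    (Λ : Set (Pt d e × Pt d e))
    (hΛX : ∀ p ∈ Λ, p.1 ∈ X)
    (hΛclosed : closure Λ ∩ {p : Pt d e × Pt d e | p.1 ∈ X} ⊆ Λ)
    (hΛconic : IsConic Λ) :
    jdjpi X (hatSum X Λ (conormalM X)) = jSharp X Λ :=
  stmt0_general X (hX.preimage (Continuous.prodMk_right 0)) Λ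
end

section
/- Let X ⊆ ℝⁿ be open, M = {x ∈ X : x' = 0}, and let Λ be a conic subset of X × ℝⁿ. Then j^#(Λ) coincides with the normal-cone description of T*M ∩ C_{T*_M X}(Λ): a pair (x''₀; ξ''₀) with (0,x''₀) ∈ M belongs to j^#(Λ) if and only if there exist a sequence of positive real numbers (cₙ) and a sequence (x'ₙ, x''ₙ; ξ'ₙ, ξ''ₙ) in Λ such that (x'ₙ, x''ₙ; ξ'ₙ, ξ''ₙ) → (0, x''₀; ξ'₀, 0) for some ξ'₀ ∈ ℝ^d, cₙ·x'ₙ → 0, and cₙ·ξ''ₙ → ξ''₀. -/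
open Filter Topology

/-- The coordinate description of `T*M ∩ C_{T*_M X}(Λ)`: the set of `(x''₀; ξ''₀)` with
`(0, x''₀) ∈ M` for which there are a sequence of positive reals `(cₙ)` and a sequence
`(x'ₙ, x''ₙ; ξ'ₙ, ξ''ₙ)` in `Λ` converging to `(0, x''₀; ξ'₀, 0)` for some `ξ'₀`, with
`cₙ • x'ₙ → 0` and `cₙ • ξ''ₙ → ξ''₀`. -/
def normalConeDesc {d e : ℕ} (X : Set (Pt d e)) (Λ : Set (Pt d e × Pt d e)) :
    Set (EuclideanSpace ℝ (Fin e) × EuclideanSpace ℝ (Fin e)) :=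
  {q | ((0 : EuclideanSpace ℝ (Fin d)), q.1) ∈ X ∧
    ∃ (c : ℕ → ℝ) (x' : ℕ → EuclideanSpace ℝ (Fin d)) (x'' : ℕ → EuclideanSpace ℝ (Fin e))
      (ξ' : ℕ → EuclideanSpace ℝ (Fin d)) (ξ'' : ℕ → EuclideanSpace ℝ (Fin e))
      (ξ'₀ : EuclideanSpace ℝ (Fin d)),
      (∀ n, 0 < c n) ∧
      (∀ n, ((x' n, x'' n), (ξ' n, ξ'' n)) ∈ Λ) ∧
      Tendsto (fun n => ((x' n, x'' n), (ξ' n, ξ'' n)))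
        atTop (nhds (((0 : EuclideanSpace ℝ (Fin d)), q.1),
          (ξ'₀, (0 : EuclideanSpace ℝ (Fin e))))) ∧
      Tendsto (fun n => c n • x' n) atTop (nhds (0 : EuclideanSpace ℝ (Fin d))) ∧
      Tendsto (fun n => c n • ξ'' n) atTop (nhds q.2)}

/-!
Rescaling the covectors by `cₙ` passes from the normal-cone description to `j^#`, and by `cₙ⁻¹`
back, because `‖x'‖ * ‖c • ξ‖ = ‖c • x'‖ * ‖ξ‖`. For the way back `cₙ` has to be produced: large
enough that `cₙ⁻¹ • ξₙ → 0`, yet small enough that `cₙ • x'ₙ → 0`. The value `√(‖ξ‖ / ‖x'‖)`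
balances the two, both norms becoming `√(‖x'‖ * ‖ξ‖)`; since `x'` or `ξ` may vanish, the norms are
first replaced by positive upper bounds whose product still tends to `0`.
-/

section Balancing

theorem sqrt_div_mul_eq_sqrt_mul {r : ℝ} (hr : 0 ≤ r) (s : ℝ) : √(s / r) * r = √(r * s) := by
  rw [Real.sqrt_div' s hr, Real.sqrt_mul hr, div_mul_eq_mul_div, mul_div_assoc,
    Real.div_sqrt, mul_comm]

theorem inv_sqrt_div_mul_eq_sqrt_mul (r : ℝ) {s : ℝ} (hs : 0 ≤ s) :
    (√(s / r))⁻¹ * s = √(r * s) := by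
  rw [← Real.sqrt_inv, inv_div, sqrt_div_mul_eq_sqrt_mul hs, mul_comm]

variable {ι E G : Type*} [SeminormedAddCommGroup E] [NormedSpace ℝ E]
  [SeminormedAddCommGroup G] [NormedSpace ℝ G] {l : Filter ι} {u : ι → E} {v : ι → G}

theorem norm_mul_norm_smul_comm (c : ℝ) (x : E) (y : G) : ‖x‖ * ‖c • y‖ = ‖c • x‖ * ‖y‖ := by
  rw [norm_smul, norm_smul, mul_left_comm, mul_assoc]

theorem exists_pos_tendsto_smul_zero_of_norm_le {r s : ι → ℝ} (hr : ∀ i, 0 < r i)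
    (hs : ∀ i, 0 < s i) (hur : ∀ i, ‖u i‖ ≤ r i) (hvs : ∀ i, ‖v i‖ ≤ s i)
    (hrs : Tendsto (fun i => r i * s i) l (𝓝 0)) :
    ∃ c : ι → ℝ, (∀ i, 0 < c i) ∧ Tendsto (fun i => c i • u i) l (𝓝 0) ∧
      Tendsto (fun i => (c i)⁻¹ • v i) l (𝓝 0) := by
  have hc : ∀ i, 0 < √(s i / r i) := fun i => Real.sqrt_pos.2 (div_pos (hs i) (hr i))
  have hsqrt : Tendsto (fun i => √(r i * s i)) l (𝓝 0) := by simpa using hrs.sqrt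
  refine ⟨fun i => √(s i / r i), hc, squeeze_zero_norm (fun i => ?_) hsqrt,
    squeeze_zero_norm (fun i => ?_) hsqrt⟩
  · calc ‖√(s i / r i) • u i‖ = √(s i / r i) * ‖u i‖ := norm_smul_of_nonneg (hc i).le _
      _ ≤ √(s i / r i) * r i := by gcongr; exact hur i
      _ = √(r i * s i) := sqrt_div_mul_eq_sqrt_mul (hr i).le _
  · calc ‖(√(s i / r i))⁻¹ • v i‖ = (√(s i / r i))⁻¹ * ‖v i‖ :=
          norm_smul_of_nonneg (inv_pos.2 (hc i)).le _
      _ ≤ (√(s i / r i))⁻¹ * s i := by gcongr; exact hvs i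
      _ = √(r i * s i) := inv_sqrt_div_mul_eq_sqrt_mul _ (hs i).le

theorem exists_pos_tendsto_smul_zero_of_norm_mul_norm {δ : ι → ℝ} (hδ_pos : ∀ i, 0 < δ i)
    (hδ : Tendsto δ l (𝓝 0)) (hu : Tendsto u l (𝓝 0))
    (huv : Tendsto (fun i => ‖u i‖ * ‖v i‖) l (𝓝 0)) :
    ∃ c : ι → ℝ, (∀ i, 0 < c i) ∧ Tendsto (fun i => c i • u i) l (𝓝 0) ∧
      Tendsto (fun i => (c i)⁻¹ • v i) l (𝓝 0) := by
  have hs : ∀ i, 0 < ‖v i‖ + 1 := fun i => by positivity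
  have hδs : ∀ i, 0 < δ i / (‖v i‖ + 1) := fun i => div_pos (hδ_pos i) (hs i)
  refine exists_pos_tendsto_smul_zero_of_norm_le
    (r := fun i => ‖u i‖ + δ i / (‖v i‖ + 1)) (s := fun i => ‖v i‖ + 1)
    (fun i => add_pos_of_nonneg_of_pos (norm_nonneg _) (hδs i)) hs
    (fun i => le_add_of_nonneg_right (hδs i).le) (fun i => le_add_of_nonneg_right zero_le_one) ?_
  have hsum : Tendsto (fun i => ‖u i‖ * ‖v i‖ + ‖u i‖ + δ i) l (𝓝 0) := by
    simpa using (huv.add hu.norm).add hδ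
  refine hsum.congr fun i => ?_
  rw [add_mul, div_mul_cancel₀ _ (hs i).ne', mul_add_one]

end Balancing

theorem stmt1_general {E F : Type*} [NormedAddCommGroup E] [NormedSpace ℝ E]
    [NormedAddCommGroup F] [NormedSpace ℝ F] {Λ : Set ((E × F) × (E × F))} (hΛ : IsConic Λ)
    (x''₀ ξ''₀ : F) :
    (∃ (x' : ℕ → E) (x'' : ℕ → F) (ξ' : ℕ → E) (ξ'' : ℕ → F),
      (∀ n, ((x' n, x'' n), (ξ' n, ξ'' n)) ∈ Λ) ∧
      Tendsto (fun n => (x'' n, ξ'' n)) atTop (𝓝 (x''₀, ξ''₀)) ∧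
      Tendsto x' atTop (𝓝 0) ∧
      Tendsto (fun n => ‖x' n‖ * ‖(ξ' n, ξ'' n)‖) atTop (𝓝 0)) ↔
    ∃ (c : ℕ → ℝ) (x' : ℕ → E) (x'' : ℕ → F) (ξ' : ℕ → E) (ξ'' : ℕ → F) (ξ'₀ : E),
      (∀ n, 0 < c n) ∧
      (∀ n, ((x' n, x'' n), (ξ' n, ξ'' n)) ∈ Λ) ∧
      Tendsto (fun n => ((x' n, x'' n), (ξ' n, ξ'' n))) atTop (𝓝 ((0, x''₀), (ξ'₀, 0))) ∧
      Tendsto (fun n => c n • x' n) atTop (𝓝 0) ∧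
      Tendsto (fun n => c n • ξ'' n) atTop (𝓝 ξ''₀) := by
  constructor
  · rintro ⟨x', x'', ξ', ξ'', hmem, hlim, hx', hprod⟩
    obtain ⟨c, hc, hcx', hcξ⟩ := exists_pos_tendsto_smul_zero_of_norm_mul_norm
      (fun _ => Nat.one_div_pos_of_nat) tendsto_one_div_add_atTop_nhds_zero_nat hx' hprod
    refine ⟨c, x', x'', fun n => (c n)⁻¹ • ξ' n, fun n => (c n)⁻¹ • ξ'' n, 0, hc,
      fun n => hΛ _ (hmem n) _ (inv_pos.2 (hc n)),
      (hx'.prodMk_nhds hlim.fst_nhds).prodMk_nhds hcξ, hcx', ?_⟩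
    simpa only [smul_inv_smul₀ (hc _).ne'] using hlim.snd_nhds
  · rintro ⟨c, x', x'', ξ', ξ'', ξ'₀, hc, hmem, hlim, hcx', hcξ''⟩
    have hbalance : Tendsto (fun n => ‖x' n‖ * ‖c n • (ξ' n, ξ'' n)‖) atTop (𝓝 0) := by
      simpa only [norm_mul_norm_smul_comm, norm_zero, zero_mul] using
        hcx'.norm.mul hlim.snd_nhds.norm
    exact ⟨x', x'', fun n => c n • ξ' n, fun n => c n • ξ'' n, fun n => hΛ _ (hmem n) _ (hc n),
      hlim.fst_nhds.snd_nhds.prodMk_nhds hcξ'', hlim.fst_nhds.fst_nhds, hbalance⟩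

/-- For a conic subset `Λ` of `X × ℝⁿ`, `j^#(Λ)` coincides with the normal-cone description
of `T*M ∩ C_{T*_M X}(Λ)`. -/
theorem stmt1 {d e : ℕ} (hd : 1 ≤ d) (he : 1 ≤ e)
    (X : Set (Pt d e)) (hX : IsOpen X)
    (Λ : Set (Pt d e × Pt d e))
    (hΛX : ∀ p ∈ Λ, p.1 ∈ X)
    (hΛconic : IsConic Λ) :
    jSharp X Λ = normalConeDesc X Λ := by
  ext q
  exact and_congr_right fun _ => stmt1_general hΛconic q.1 q.2
end

section
/- Let X ⊆ ℝⁿ be open, M = {x ∈ X : x' = 0}, and let Λ be a closed conic subset of X × ℝⁿ. Then (Λ +̂ T*_M X) +̂ T*_M X = Λ +̂ T*_M X. (Lemma 3.3 of the paper.) -/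
open Filter Topology

/-!
`A +̂ B` is the part over `X` of the preimage of a closed set under a continuous map, hence closed
over `X`. If `B = M × W` with `W` stable under addition, then `A +̂ B` is moreover stable under
translation of covectors by `W`. A point of `(A +̂ B) +̂ B` is a limit of points `(xₙ; ξₙ + ηₙ)`
with `(xₙ; ξₙ) ∈ A +̂ B` and `ηₙ ∈ W`, which therefore lie in `A +̂ B`, and so does their limit.
Conversely, `A +̂ B ⊆ (A +̂ B) +̂ B` by taking `ηₙ = 0`.
-/

section HatSum

variable {V : Type*} [NormedAddCommGroup V] {X : Set V} {A B : Set (V × V)} {p : V × V}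

/-- The quadruples `(x, y, ξ + η, |x - y| |ξ|)` with `(x; ξ) ∈ A` and `(y; η) ∈ B`: the quantities
whose limits define `A +̂ B`. -/
def hatSumData (A B : Set (V × V)) : Set (V × V × V × ℝ) :=
  (fun q : (V × V) × (V × V) => (q.1.1, q.2.1, q.1.2 + q.2.2, ‖q.1.1 - q.2.1‖ * ‖q.1.2‖)) ''
    A ×ˢ B

theorem mem_hatSum_iff_mem_closure :
    p ∈ hatSum X A B ↔ p.1 ∈ X ∧ (p.1, p.1, p.2, (0 : ℝ)) ∈ closure (hatSumData A B) := by
  refine and_congr_right fun _ => ?_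
  rw [mem_closure_iff_seq_limit]
  constructor
  · rintro ⟨x, ξ, y, η, hA, hB, hx, hy, hsum, hmul⟩
    exact ⟨fun n => (x n, y n, ξ n + η n, ‖x n - y n‖ * ‖ξ n‖),
      fun n => ⟨((x n, ξ n), (y n, η n)), ⟨hA n, hB n⟩, rfl⟩,
      hx.prodMk_nhds (hy.prodMk_nhds (hsum.prodMk_nhds hmul))⟩
  · rintro ⟨u, hu, hlim⟩
    choose q hq hqu using hu
    obtain rfl := funext hqu
    exact ⟨fun n => (q n).1.1, fun n => (q n).1.2, fun n => (q n).2.1, fun n => (q n).2.2,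
      fun n => (hq n).1, fun n => (hq n).2, hlim.fst_nhds, hlim.snd_nhds.fst_nhds,
      hlim.snd_nhds.snd_nhds.fst_nhds, hlim.snd_nhds.snd_nhds.snd_nhds⟩

theorem mem_hatSum_of_tendsto {u : ℕ → V × V} (hu : ∀ n, u n ∈ hatSum X A B)
    (hlim : Tendsto u atTop (𝓝 p)) (hp : p.1 ∈ X) : p ∈ hatSum X A B := by
  have hclosed : IsClosed {q : V × V | (q.1, q.1, q.2, (0 : ℝ)) ∈ closure (hatSumData A B)} :=
    isClosed_closure.preimage (by fun_prop)
  exact mem_hatSum_iff_mem_closure.2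
    ⟨hp, hclosed.mem_of_tendsto hlim (.of_forall fun n => (mem_hatSum_iff_mem_closure.1 (hu n)).2)⟩

theorem add_mem_hatSum {ζ : V} (hB : ∀ b ∈ B, (b.1, b.2 + ζ) ∈ B) (hp : p ∈ hatSum X A B) :
    (p.1, p.2 + ζ) ∈ hatSum X A B := by
  obtain ⟨hpX, x, ξ, y, η, hxA, hyB, hx, hy, hsum, hmul⟩ := hp
  refine ⟨hpX, x, ξ, y, fun n => η n + ζ, hxA, fun n => hB _ (hyB n), hx, hy, ?_, hmul⟩
  simpa only [add_assoc] using hsum.add_const ζ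

theorem hatSum_subset_hatSum_hatSum (hB : ∀ b ∈ B, (b.1, 0) ∈ B) :
    hatSum X A B ⊆ hatSum X (hatSum X A B) B := by
  intro p hp
  obtain ⟨hpX, -, -, y, η, -, hyB, -, hy, -, -⟩ := id hp
  have hmul : Tendsto (fun n => ‖p.1 - y n‖ * ‖p.2‖) atTop (𝓝 0) := by
    simpa using ((hy.const_sub p.1).norm).mul_const ‖p.2‖
  exact ⟨hpX, fun _ => p.1, fun _ => p.2, y, fun _ => 0, fun _ => hp, fun n => hB _ (hyB n),
    tendsto_const_nhds, hy, by simp, hmul⟩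

theorem hatSum_hatSum_subset (hB : ∀ b ∈ B, ∀ c ∈ B, (b.1, b.2 + c.2) ∈ B) :
    hatSum X (hatSum X A B) B ⊆ hatSum X A B := by
  rintro p ⟨hpX, x, ξ, y, η, hxξ, hyη, hx, -, hsum, -⟩
  have htranslate : ∀ n, (x n, ξ n + η n) ∈ hatSum X A B := fun n =>
    add_mem_hatSum (fun b hb => hB b hb _ (hyη n)) (hxξ n)
  exact mem_hatSum_of_tendsto htranslate (hx.prodMk_nhds hsum) hpX

theorem stmt2_general (X : Set V) (A : Set (V × V)) (M : Set V) (W : AddSubmonoid V) :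
    hatSum X (hatSum X A (M ×ˢ W)) (M ×ˢ W) = hatSum X A (M ×ˢ W) :=
  Set.Subset.antisymm
    (hatSum_hatSum_subset fun _ hb _ hc => ⟨hb.1, W.add_mem hb.2 hc.2⟩)
    (hatSum_subset_hatSum_hatSum fun _ hb => ⟨hb.1, W.zero_mem⟩)

end HatSum

theorem conormalM_eq_prod {d e : ℕ} (X : Set (Pt d e)) :
    conormalM X =
      {x | x.1 = 0 ∧ x ∈ X} ×ˢ ((⊤ : AddSubmonoid _).prod ⊥ : AddSubmonoid (Pt d e)) := by
  ext p
  simp [conormalM, AddSubmonoid.mem_prod, and_assoc]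

/-- **Lemma 3.3.** For a closed conic subset `Λ` of `X × ℝⁿ`,
`(Λ +̂ T*_M X) +̂ T*_M X = Λ +̂ T*_M X`. -/
theorem stmt2 {d e : ℕ} (hd : 1 ≤ d) (he : 1 ≤ e)
    (X : Set (Pt d e)) (hX : IsOpen X)
    (Λ : Set (Pt d e × Pt d e))
    (hΛX : ∀ p ∈ Λ, p.1 ∈ X)
    (hΛclosed : closure Λ ∩ {p : Pt d e × Pt d e | p.1 ∈ X} ⊆ Λ)
    (hΛconic : IsConic Λ) :
    hatSum X (hatSum X Λ (conormalM X)) (conormalM X) = hatSum X Λ (conormalM X) := by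
  rw [conormalM_eq_prod]
  exact stmt2_general X Λ _ _
end

section
/- Let X ⊆ ℝⁿ be open, M = {x ∈ X : x' = 0}, and let Λ be a closed conic subset of X × ℝⁿ satisfying the non-characteristic condition Λ ∩ T*_M X ⊆ X × {0}. Then Λ +̂ T*_M X = Λ + T*_M X, where Λ + T*_M X = {(0, x''; ξ' + η', ξ'') : (0, x''; ξ', ξ'') ∈ Λ, η' ∈ ℝ^d}. -/
open Filter Topology

/-!
The theorem is the conormal case of a fact about arbitrary closed cones `A` and `B`: if no nonzero
covector `ξ` has `ξ ∈ A` and `-ξ ∈ B` over the same point, then `A +̂ B = A + B`. Suppose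
`ξₙ + ηₙ` converges. If `|ξₙ|` does not tend to infinity, both `ξₙ` and `ηₙ` converge along a
subsequence, and their limits lie in `A` and `B`. If `|ξₙ| → ∞`, then `(ξₙ + ηₙ) / |ξₙ| → 0`, so a
limit direction `ζ` of `ξₙ` is a unit covector in `A` with `-ζ` in `B`, which is excluded.
-/

/-- The fibrewise sum `A + B` of two subsets of `T*X`, with pairs `(x; ξ)` encoded as elements of a
product of a base and a fibre. -/
def fiberSum {Y E : Type*} [Add E] (A B : Set (Y × E)) : Set (Y × E) :=
  {p | ∃ ξ η : E, (p.1, ξ) ∈ A ∧ (p.1, η) ∈ B ∧ p.2 = ξ + η}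

section Subsequences

theorem exists_tendsto_subseq_of_not_tendsto_norm_atTop {E : Type*} [SeminormedAddCommGroup E]
    [ProperSpace E] {u : ℕ → E} (hu : ¬Tendsto (fun n => ‖u n‖) atTop atTop) :
    ∃ (a : E) (φ : ℕ → ℕ), StrictMono φ ∧ Tendsto (u ∘ φ) atTop (𝓝 a) := by
  obtain ⟨R, hR⟩ : ∃ R, ∃ᶠ n in atTop, ‖u n‖ < R := by
    simpa only [tendsto_atTop, not_forall, not_eventually, not_le] using hu
  obtain ⟨a, -, φ, hφ, hlim⟩ := tendsto_subseq_of_frequently_bounded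
    (Metric.isBounded_ball (x := (0 : E)) (r := R)) (hR.mono fun _ hn => mem_ball_zero_iff.2 hn)
  exact ⟨a, φ, hφ, hlim⟩

theorem exists_tendsto_subseq_norm_inv_smul {E : Type*} [NormedAddCommGroup E] [NormedSpace ℝ E]
    [ProperSpace E] {u : ℕ → E} (hu : ∃ᶠ n in atTop, u n ≠ 0) :
    ∃ (a : E) (φ : ℕ → ℕ), ‖a‖ = 1 ∧ StrictMono φ ∧
      Tendsto (fun n => ‖u (φ n)‖⁻¹ • u (φ n)) atTop (𝓝 a) := by
  have hsphere : ∃ᶠ n in atTop, ‖u n‖⁻¹ • u n ∈ Metric.sphere (0 : E) 1 :=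
    hu.mono fun n hn => mem_sphere_zero_iff_norm.2 (norm_smul_inv_norm (𝕜 := ℝ) hn)
  obtain ⟨a, ha, φ, hφ, hlim⟩ := (isCompact_sphere (0 : E) 1).tendsto_subseq' hsphere
  exact ⟨a, φ, mem_sphere_zero_iff_norm.1 ha, hφ, hlim⟩

end Subsequences

section Cones

variable {V : Type*} [NormedAddCommGroup V] {X : Set V} {A B : Set (V × V)}

theorem fiberSum_subset_hatSum (hAX : ∀ p ∈ A, p.1 ∈ X) : fiberSum A B ⊆ hatSum X A B := by
  rintro ⟨x, ζ⟩ ⟨ξ, η, hξ, hη, rfl : ζ = ξ + η⟩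
  refine ⟨hAX (x, ξ) hξ, fun _ => x, fun _ => ξ, fun _ => x, fun _ => η, fun _ => hξ, fun _ => hη,
    tendsto_const_nhds, tendsto_const_nhds, tendsto_const_nhds, ?_⟩
  simp only [sub_self, norm_zero, zero_mul, tendsto_const_nhds]

variable [NormedSpace ℝ V]

theorem IsConic.mem_of_tendsto_smul (hA : IsConic A) (hAcl : closure A ∩ Prod.fst ⁻¹' X ⊆ A)
    {ι : Type*} {l : Filter ι} [l.NeBot] {x ξ : ι → V} {c : ι → ℝ} {x₀ ζ : V} (hx₀ : x₀ ∈ X)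
    (hmem : ∀ i, (x i, ξ i) ∈ A) (hc : ∀ᶠ i in l, 0 < c i) (hx : Tendsto x l (𝓝 x₀))
    (hζ : Tendsto (fun i => c i • ξ i) l (𝓝 ζ)) : (x₀, ζ) ∈ A :=
  hAcl ⟨mem_closure_of_tendsto (hx.prodMk_nhds hζ) (hc.mono fun i hi => hA _ (hmem i) _ hi), hx₀⟩

variable [ProperSpace V]

theorem not_tendsto_norm_atTop_of_tendsto_add (hA : IsConic A) (hB : IsConic B)
    (hAcl : closure A ∩ Prod.fst ⁻¹' X ⊆ A) (hBcl : closure B ∩ Prod.fst ⁻¹' X ⊆ B)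
    (hAB : ∀ x ξ, (x, ξ) ∈ A → (x, -ξ) ∈ B → ξ = 0) {x ξ y η : ℕ → V} {x₀ ζ₀ : V} (hx₀ : x₀ ∈ X)
    (hxξ : ∀ n, (x n, ξ n) ∈ A) (hyη : ∀ n, (y n, η n) ∈ B) (hx : Tendsto x atTop (𝓝 x₀))
    (hy : Tendsto y atTop (𝓝 x₀)) (hsum : Tendsto (fun n => ξ n + η n) atTop (𝓝 ζ₀)) :
    ¬Tendsto (fun n => ‖ξ n‖) atTop atTop := by
  intro hξ
  have hpos : ∀ᶠ n in atTop, 0 < ‖ξ n‖ := hξ.eventually_gt_atTop 0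
  obtain ⟨ζ, φ, hζ_norm, hφ, hξζ⟩ := exists_tendsto_subseq_norm_inv_smul
    (hpos.frequently.mono fun _ hn => norm_pos_iff.1 hn)
  have hφ_top : Tendsto φ atTop atTop := hφ.tendsto_atTop
  have hsum_scaled : Tendsto (fun n => ‖ξ (φ n)‖⁻¹ • (ξ (φ n) + η (φ n))) atTop (𝓝 0) := by
    simpa only [zero_smul, Function.comp_apply] using
      (tendsto_inv_atTop_zero.comp (hξ.comp hφ_top)).smul (hsum.comp hφ_top)
  have hηζ : Tendsto (fun n => ‖ξ (φ n)‖⁻¹ • η (φ n)) atTop (𝓝 (-ζ)) := by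
    simpa only [smul_add, add_sub_cancel_left, zero_sub] using hsum_scaled.sub hξζ
  have hscale : ∀ᶠ n in atTop, 0 < ‖ξ (φ n)‖⁻¹ :=
    (hφ_top.eventually hpos).mono fun _ => inv_pos.2
  have hζA : (x₀, ζ) ∈ A :=
    hA.mem_of_tendsto_smul hAcl hx₀ (fun n => hxξ (φ n)) hscale (hx.comp hφ_top) hξζ
  have hζB : (x₀, -ζ) ∈ B :=
    hB.mem_of_tendsto_smul hBcl hx₀ (fun n => hyη (φ n)) hscale (hy.comp hφ_top) hηζ
  rw [hAB x₀ ζ hζA hζB, norm_zero] at hζ_norm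
  exact zero_ne_one hζ_norm

theorem hatSum_subset_fiberSum (hA : IsConic A) (hB : IsConic B)
    (hAcl : closure A ∩ Prod.fst ⁻¹' X ⊆ A) (hBcl : closure B ∩ Prod.fst ⁻¹' X ⊆ B)
    (hAB : ∀ x ξ, (x, ξ) ∈ A → (x, -ξ) ∈ B → ξ = 0) : hatSum X A B ⊆ fiberSum A B := by
  rintro ⟨x₀, ζ₀⟩ ⟨hx₀, x, ξ, y, η, hxξ, hyη, hx, hy, hsum, -⟩
  obtain ⟨ξ₀, φ, hφ, hξ⟩ := exists_tendsto_subseq_of_not_tendsto_norm_atTop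
    (not_tendsto_norm_atTop_of_tendsto_add hA hB hAcl hBcl hAB hx₀ hxξ hyη hx hy hsum)
  have hφ_top : Tendsto φ atTop atTop := hφ.tendsto_atTop
  have hη : Tendsto (η ∘ φ) atTop (𝓝 (ζ₀ - ξ₀)) :=
    ((hsum.comp hφ_top).sub hξ).congr fun n => add_sub_cancel_left (ξ (φ n)) (η (φ n))
  have hξ₀ : (x₀, ξ₀) ∈ A :=
    hAcl ⟨mem_closure_of_tendsto ((hx.comp hφ_top).prodMk_nhds hξ)
      (.of_forall fun n => hxξ (φ n)), hx₀⟩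
  have hη₀ : (x₀, ζ₀ - ξ₀) ∈ B :=
    hBcl ⟨mem_closure_of_tendsto ((hy.comp hφ_top).prodMk_nhds hη)
      (.of_forall fun n => hyη (φ n)), hx₀⟩
  exact ⟨ξ₀, ζ₀ - ξ₀, hξ₀, hη₀, (add_sub_cancel ξ₀ ζ₀).symm⟩

theorem stmt7_general (hAX : ∀ p ∈ A, p.1 ∈ X) (hA : IsConic A) (hB : IsConic B)
    (hAcl : closure A ∩ Prod.fst ⁻¹' X ⊆ A) (hBcl : closure B ∩ Prod.fst ⁻¹' X ⊆ B)
    (hAB : ∀ x ξ, (x, ξ) ∈ A → (x, -ξ) ∈ B → ξ = 0) : hatSum X A B = fiberSum A B :=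
  (hatSum_subset_fiberSum hA hB hAcl hBcl hAB).antisymm (fiberSum_subset_hatSum hAX)

end Cones

section Conormal

variable {d e : ℕ} {X : Set (Pt d e)}

theorem isConic_conormalM : IsConic (conormalM X) :=
  fun _ ⟨hx', hx, hξ''⟩ _ _ => ⟨hx', hx, smul_eq_zero_of_right _ hξ''⟩

theorem closure_conormalM_inter_subset :
    closure (conormalM X) ∩ Prod.fst ⁻¹' X ⊆ conormalM X := by
  have hclosed : IsClosed {p : Pt d e × Pt d e | p.1.1 = 0 ∧ p.2.2 = 0} :=
    (isClosed_eq (by fun_prop) continuous_const).inter (isClosed_eq (by fun_prop) continuous_const)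
  have hsubset : conormalM X ⊆ {p | p.1.1 = 0 ∧ p.2.2 = 0} := fun _ ⟨hx', _, hξ''⟩ => ⟨hx', hξ''⟩
  rintro p ⟨hp, hpX⟩
  obtain ⟨hx', hξ''⟩ := closure_minimal hsubset hclosed hp
  exact ⟨hx', hpX, hξ''⟩

theorem mk_neg_mem_conormalM {x ξ : Pt d e} : (x, -ξ) ∈ conormalM X ↔ (x, ξ) ∈ conormalM X := by
  simp only [conormalM, Set.mem_ofPred_eq, Prod.snd_neg, neg_eq_zero]

theorem fiberSum_conormalM {Λ : Set (Pt d e × Pt d e)} (hΛX : ∀ p ∈ Λ, p.1 ∈ X) :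
    fiberSum Λ (conormalM X) = {p | p.1.1 = 0 ∧
      ∃ ξ' η' : EuclideanSpace ℝ (Fin d), (p.1, (ξ', p.2.2)) ∈ Λ ∧ p.2.1 = ξ' + η'} := by
  ext ⟨x, ζ⟩
  constructor
  · rintro ⟨⟨ξ', ξ''⟩, ⟨η', η''⟩, hξ, ⟨hx', -, rfl : η'' = 0⟩, rfl : ζ = _⟩
    exact ⟨hx', ξ', η', by simpa using hξ, rfl⟩
  · rintro ⟨hx', ξ', η', hξ, hζ'⟩
    exact ⟨(ξ', ζ.2), (η', 0), hξ, ⟨hx', hΛX (x, (ξ', ζ.2)) hξ, rfl⟩,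
      Prod.ext hζ' (add_zero ζ.2).symm⟩

end Conormal

/-- If `Λ` is a closed conic subset of `X × ℝⁿ` satisfying the non-characteristic condition
`Λ ∩ T*_M X ⊆ X × {0}`, then `Λ +̂ T*_M X = Λ + T*_M X`, where
`Λ + T*_M X = {(0, x''; ξ' + η', ξ'') : (0, x''; ξ', ξ'') ∈ Λ, η' ∈ ℝ^d}`. -/
theorem stmt7 {d e : ℕ} (hd : 1 ≤ d) (he : 1 ≤ e)
    (X : Set (Pt d e)) (hX : IsOpen X)
    (Λ : Set (Pt d e × Pt d e))
    (hΛX : ∀ p ∈ Λ, p.1 ∈ X)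
    (hΛclosed : closure Λ ∩ {p : Pt d e × Pt d e | p.1 ∈ X} ⊆ Λ)
    (hΛconic : IsConic Λ)
    (hnc : ∀ p ∈ Λ ∩ conormalM X, p.2 = 0) :
    hatSum X Λ (conormalM X)
      = {p : Pt d e × Pt d e | p.1.1 = 0 ∧
          ∃ ξ' η' : EuclideanSpace ℝ (Fin d),
            (p.1, ((ξ' : EuclideanSpace ℝ (Fin d)), p.2.2)) ∈ Λ ∧ p.2.1 = ξ' + η'} := by
  rw [← fiberSum_conormalM hΛX]
  exact stmt7_general hΛX hΛconic isConic_conormalM hΛclosed closure_conormalM_inter_subset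
    fun x ξ hξ hneg => hnc (x, ξ) ⟨hξ, mk_neg_mem_conormalM.1 hneg⟩
end

section
/- Let X ⊆ ℝⁿ be open, M = {x ∈ X : x' = 0}, and let Λ be a closed conic subset of X × ℝⁿ satisfying the non-characteristic condition Λ ∩ T*_M X ⊆ X × {0}. Then j_d j_π^{−1}(Λ +̂ T*_M X) = j_d j_π^{−1}(Λ). -/
open Filter Topology

/-!
The non-characteristic condition is an estimate in disguise: since the unit sphere is compact and
`Λ` is conic, it forces `|ξ| ≤ C |ξ''|` for all `(x; ξ) ∈ Λ` with `x` near a given point of `M`.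
Adding elements of `T*_M X` does not change `ξ''`, so whenever `ξₙ + ηₙ` converges, the `ξₙ''`
converge and hence the `ξₙ` are bounded. A limit point of the `ξₙ` is then the required covector
of `Λ`.
-/

theorem exists_pos_eventually_forall_mem_lt_of_isCompact {X Y : Type*} [TopologicalSpace X]
    [TopologicalSpace Y] {A : Set (X × Y)} {K : Set Y} {f : Y → ℝ} {x₀ : X} (hK : IsCompact K)
    (hf : Continuous f) (hpos : ∀ y ∈ K, (x₀, y) ∈ closure A → 0 < f y) :
    ∃ c > 0, ∀ᶠ x in 𝓝 x₀, ∀ y ∈ K, (x, y) ∈ A → c < f y := by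
  -- Treating the constant `c` as a variable near `0` lets compactness choose it uniformly.
  have uniform : ∀ᶠ q : ℝ × X in 𝓝 (0, x₀), ∀ y ∈ K, (q.2, y) ∈ A → q.1 < f y := by
    refine hK.eventually_forall_of_forall_eventually fun y hy => ?_
    by_cases hyA : (x₀, y) ∈ closure A
    · have hlt : ∀ᶠ z : (ℝ × X) × Y in 𝓝 ((0, x₀), y), z.1.1 < f z.2 :=
        ContinuousAt.eventually_lt (by fun_prop) (by fun_prop) (hpos y hy hyA)
      exact hlt.mono fun _ hz _ => hz
    · have hproj : Tendsto (fun z : (ℝ × X) × Y => (z.1.2, z.2)) (𝓝 ((0, x₀), y)) (𝓝 (x₀, y)) :=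
        Continuous.tendsto (by fun_prop) ((0, x₀), y)
      filter_upwards [hproj.eventually (isClosed_closure.isOpen_compl.mem_nhds hyA)] with z hz hzA
      exact absurd (subset_closure hzA) hz
  rw [nhds_prod_eq] at uniform
  obtain ⟨c, hcx, hc⟩ :=
    ((uniform.curry.filter_mono nhdsWithin_le_nhds).and self_mem_nhdsWithin :
      ∀ᶠ c in 𝓝[>] (0 : ℝ), _).exists
  exact ⟨c, hc, hcx⟩

namespace IsConic

variable {V F : Type*} [NormedAddCommGroup V] [NormedSpace ℝ V] [ProperSpace V]
  [NormedAddCommGroup F] [NormedSpace ℝ F] {A : Set (V × V)} {x₀ : V} {π : V →L[ℝ] F}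

theorem exists_eventually_norm_le_mul (hA : IsConic A)
    (hπ : ∀ ζ, (x₀, ζ) ∈ closure A → π ζ = 0 → ζ = 0) :
    ∃ C, ∀ᶠ x in 𝓝 x₀, ∀ ζ, (x, ζ) ∈ A → ‖ζ‖ ≤ C * ‖π ζ‖ := by
  have hpos : ∀ ζ ∈ Metric.sphere (0 : V) 1, (x₀, ζ) ∈ closure A → 0 < ‖π ζ‖ :=
    fun ζ hζ hζA => norm_pos_iff.2 fun h => ne_zero_of_mem_unit_sphere ⟨ζ, hζ⟩ (hπ ζ hζA h)
  obtain ⟨c, hc, hsphere⟩ := exists_pos_eventually_forall_mem_lt_of_isCompact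
    (isCompact_sphere 0 1) π.continuous.norm hpos
  refine ⟨c⁻¹, hsphere.mono fun x hx ζ hζA => ?_⟩
  rcases eq_or_ne ζ 0 with rfl | hζ
  · simp
  have hnorm : 0 < ‖ζ‖ := norm_pos_iff.2 hζ
  have hlt : c < ‖π (‖ζ‖⁻¹ • ζ)‖ :=
    hx _ (by simp [norm_smul, hnorm.ne']) (hA _ hζA _ (inv_pos.2 hnorm))
  rw [map_smul, norm_smul, norm_inv, norm_norm, inv_mul_eq_div, lt_div_iff₀ hnorm] at hlt
  exact (le_inv_mul_iff₀ hc).2 hlt.le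

theorem exists_mem_closure_map_eq_of_tendsto (hA : IsConic A)
    (hπ : ∀ ζ, (x₀, ζ) ∈ closure A → π ζ = 0 → ζ = 0) {x ξ : ℕ → V} {b : F}
    (hmem : ∀ n, (x n, ξ n) ∈ A) (hx : Tendsto x atTop (𝓝 x₀))
    (hξ : Tendsto (fun n => π (ξ n)) atTop (𝓝 b)) :
    ∃ ζ, (x₀, ζ) ∈ closure A ∧ π ζ = b := by
  obtain ⟨C, hC⟩ := hA.exists_eventually_norm_le_mul hπ
  have hbound : ∀ᶠ n in atTop, ‖ξ n‖ < C * ‖b‖ + 1 := by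
    filter_upwards [hx.eventually hC,
      (hξ.norm.const_mul C).eventually_lt_const (lt_add_one (C * ‖b‖))] with n hle hlt
    exact (hle _ (hmem n)).trans_lt hlt
  obtain ⟨ζ, -, φ, hφ, hζ⟩ := tendsto_subseq_of_frequently_bounded
    (Metric.isBounded_ball (x := (0 : V)) (r := C * ‖b‖ + 1))
    (hbound.mono fun n hn => mem_ball_zero_iff.2 hn).frequently
  refine ⟨ζ, ?_, ?_⟩
  · exact mem_closure_of_tendsto ((hx.comp hφ.tendsto_atTop).prodMk_nhds hζ)
      (Eventually.of_forall fun n => hmem (φ n))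
  · exact tendsto_nhds_unique ((π.continuous.tendsto ζ).comp hζ) (hξ.comp hφ.tendsto_atTop)

theorem exists_mem_closure_map_eq_of_mem_hatSum (hA : IsConic A) {X : Set V} {B : Set (V × V)}
    {p : V × V} (hπ : ∀ ζ, (p.1, ζ) ∈ closure A → π ζ = 0 → ζ = 0)
    (hB : ∀ q ∈ B, π q.2 = 0) (hp : p ∈ hatSum X A B) :
    ∃ ζ, (p.1, ζ) ∈ closure A ∧ π ζ = π p.2 := by
  obtain ⟨-, x, ξ, y, η, hxξ, hyη, hx, -, hsum, -⟩ := hp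
  refine hA.exists_mem_closure_map_eq_of_tendsto hπ hxξ hx ?_
  refine ((π.continuous.tendsto p.2).comp hsum).congr fun n => ?_
  simp [hB _ (hyη n)]

end IsConic

theorem mem_hatSum_of_zero_mem {V : Type*} [NormedAddCommGroup V] {X : Set V} {A B : Set (V × V)}
    {p : V × V} (hpX : p.1 ∈ X) (hpA : p ∈ A) (hpB : (p.1, 0) ∈ B) : p ∈ hatSum X A B :=
  ⟨hpX, fun _ => p.1, fun _ => p.2, fun _ => p.1, fun _ => 0, fun _ => hpA, fun _ => hpB,
    tendsto_const_nhds, tendsto_const_nhds, by simp, by simp⟩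

theorem stmt8_general {d e : ℕ} (X : Set (Pt d e)) (Λ : Set (Pt d e × Pt d e))
    (hΛclosed : closure Λ ∩ {p : Pt d e × Pt d e | p.1 ∈ X} ⊆ Λ)
    (hΛconic : IsConic Λ)
    (hnc : ∀ p ∈ Λ ∩ conormalM X, p.2 = 0) :
    jdjpi X (hatSum X Λ (conormalM X)) = jdjpi X Λ := by
  ext ⟨x'', ξ''⟩
  refine and_congr_right fun hxX => ⟨?_, ?_⟩
  · rintro ⟨ξ', hξ⟩
    have hnonchar : ∀ ζ : Pt d e, ((0, x''), ζ) ∈ closure Λ →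
        ContinuousLinearMap.snd ℝ _ _ ζ = 0 → ζ = 0 :=
      fun ζ hζ hζ'' => hnc _ ⟨hΛclosed ⟨hζ, hxX⟩, rfl, hxX, hζ''⟩
    obtain ⟨⟨ζ', ζ''⟩, hζ, rfl : ζ'' = ξ''⟩ :=
      hΛconic.exists_mem_closure_map_eq_of_mem_hatSum hnonchar (fun _ hq => hq.2.2) hξ
    exact ⟨ζ', hΛclosed ⟨hζ, hxX⟩⟩
  · rintro ⟨ξ', hξ⟩
    exact ⟨ξ', mem_hatSum_of_zero_mem hxX hξ ⟨rfl, hxX, rfl⟩⟩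

/-- If `Λ` is a closed conic subset of `X × ℝⁿ` satisfying the non-characteristic condition
`Λ ∩ T*_M X ⊆ X × {0}`, then `j_d j_π^{-1}(Λ +̂ T*_M X) = j_d j_π^{-1}(Λ)`. -/
theorem stmt8 {d e : ℕ} (hd : 1 ≤ d) (he : 1 ≤ e)
    (X : Set (Pt d e)) (hX : IsOpen X)
    (Λ : Set (Pt d e × Pt d e))
    (hΛX : ∀ p ∈ Λ, p.1 ∈ X)
    (hΛclosed : closure Λ ∩ {p : Pt d e × Pt d e | p.1 ∈ X} ⊆ Λ)
    (hΛconic : IsConic Λ)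
    (hnc : ∀ p ∈ Λ ∩ conormalM X, p.2 = 0) :
    jdjpi X (hatSum X Λ (conormalM X)) = jdjpi X Λ :=
  stmt8_general X Λ hΛclosed hΛconic hnc
end

section
/- Let γ ⊆ ℝⁿ be a closed convex cone with vertex at 0, and let ξ₀ ∈ ℝⁿ satisfy ⟨v, ξ₀⟩ < 0 for every v ∈ γ \ {0}. Let U ⊆ ℝⁿ be open and x₀ ∈ U. Then there exist an open neighborhood W of x₀ and ε > 0 such that the closure of (W + γ) ∩ {y ∈ ℝⁿ : ⟨y − x₀, ξ₀⟩ > −ε} is compact and contained in U. -/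
open RealInnerProductSpace

/-!
By compactness of the unit sphere, a functional `f` that is negative on a closed cone `γ` away from
`0` satisfies `f v ≤ -(c * ‖v‖)` on `γ` for some `c > 0`. If `y = w + v` with `w` near `x₀` and
`v ∈ γ`, a lower bound on `f (y - x₀)` is then an upper bound on `‖v‖`. Shrinking the ball around
`x₀` and the half-space at the same rate `δ` confines `y` to a ball of radius proportional to `δ`.
-/

section

open Metric Topology
open scoped Pointwise

variable {E : Type*} [NormedAddCommGroup E] [NormedSpace ℝ E] {γ : Set E} {f : E →L[ℝ] ℝ}

theorem exists_pos_forall_le_neg_mul_norm_of_isClosed_cone [ProperSpace E] (hγ : IsClosed γ)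
    (hcone : ∀ v ∈ γ, ∀ t : ℝ, 0 < t → t • v ∈ γ) (hf : ∀ v ∈ γ, v ≠ 0 → f v < 0) :
    ∃ c : ℝ, 0 < c ∧ ∀ v ∈ γ, f v ≤ -(c * ‖v‖) := by
  have hcompact : IsCompact (sphere (0 : E) 1 ∩ γ) := (isCompact_sphere 0 1).inter_right hγ
  have hpos : ∀ u ∈ sphere (0 : E) 1 ∩ γ, 0 < -f u := fun u hu ↦
    neg_pos.mpr (hf u hu.2 (ne_zero_of_mem_unit_sphere ⟨u, hu.1⟩))
  obtain ⟨c, hc, hle⟩ := hcompact.exists_forall_le' (by fun_prop) hpos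
  refine ⟨c, hc, fun v hv ↦ ?_⟩
  obtain rfl | hv₀ := eq_or_ne v 0
  · simp
  have hnorm : 0 < ‖v‖ := norm_pos_iff.mpr hv₀
  have hunit : ‖v‖⁻¹ • v ∈ sphere (0 : E) 1 ∩ γ :=
    ⟨by simp [norm_smul, hnorm.ne'], hcone v hv _ (inv_pos.mpr hnorm)⟩
  have hc_le : c ≤ ‖v‖⁻¹ * -f v := by simpa using hle _ hunit
  have hmul : ‖v‖ * c ≤ -f v := (le_inv_mul_iff₀ hnorm).mp hc_le
  linarith

theorem ball_add_inter_halfSpace_subset_closedBall {c : ℝ} (hc : 0 < c)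
    (hf : ∀ v ∈ γ, f v ≤ -(c * ‖v‖)) (x₀ : E) (δ ε : ℝ) :
    (ball x₀ δ + γ) ∩ {y | -ε < f (y - x₀)} ⊆ closedBall x₀ (δ + (ε + ‖f‖ * δ) / c) := by
  rintro _ ⟨⟨w, hw, v, hv, rfl⟩, hy⟩
  rw [mem_ball_iff_norm] at hw
  have hsplit : w + v - x₀ = (w - x₀) + v := add_sub_right_comm w v x₀
  have hfw : f (w - x₀) ≤ ‖f‖ * δ :=
    (le_abs_self _).trans (f.le_opNorm_of_le hw.le)
  have hfy : -ε < f (w - x₀) + f v := by rwa [← map_add, ← hsplit]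
  have hv_norm : ‖v‖ ≤ (ε + ‖f‖ * δ) / c := by
    rw [le_div_iff₀' hc]
    linarith [hf v hv]
  rw [mem_closedBall_iff_norm]
  calc ‖w + v - x₀‖ = ‖(w - x₀) + v‖ := by rw [hsplit]
    _ ≤ ‖w - x₀‖ + ‖v‖ := norm_add_le _ _
    _ ≤ δ + (ε + ‖f‖ * δ) / c := add_le_add hw.le hv_norm

theorem stmt10_general [ProperSpace E] (hγ : IsClosed γ)
    (hcone : ∀ v ∈ γ, ∀ t : ℝ, 0 < t → t • v ∈ γ) (hf : ∀ v ∈ γ, v ≠ 0 → f v < 0)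
    {U : Set E} {x₀ : E} (hU : U ∈ 𝓝 x₀) :
    ∃ (W : Set E) (ε : ℝ), IsOpen W ∧ x₀ ∈ W ∧ 0 < ε ∧
      IsCompact (closure ((W + γ) ∩ {y | -ε < f (y - x₀)})) ∧
      closure ((W + γ) ∩ {y | -ε < f (y - x₀)}) ⊆ U := by
  obtain ⟨c, hc, hle⟩ := exists_pos_forall_le_neg_mul_norm_of_isClosed_cone hγ hcone hf
  obtain ⟨r, hr, hrU⟩ := nhds_basis_closedBall.mem_iff.mp hU
  obtain ⟨δ, hδ, hδr⟩ : ∃ δ : ℝ, 0 < δ ∧ δ + (δ + ‖f‖ * δ) / c = r :=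
    ⟨r / (1 + (1 + ‖f‖) / c), by positivity, by field_simp⟩
  have hsub : closure ((ball x₀ δ + γ) ∩ {y | -δ < f (y - x₀)}) ⊆ closedBall x₀ r :=
    closure_minimal (hδr ▸ ball_add_inter_halfSpace_subset_closedBall hc hle x₀ δ δ)
      isClosed_closedBall
  exact ⟨ball x₀ δ, δ, isOpen_ball, mem_ball_self hδ, hδ,
    (isCompact_closedBall x₀ r).of_isClosed_subset isClosed_closure hsub, hsub.trans hrU⟩

end

/-- Let `γ ⊆ ℝⁿ` be a closed convex cone with vertex at `0` and let `ξ₀` satisfy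
`⟪v, ξ₀⟫ < 0` for every `v ∈ γ \ {0}`.  Let `U` be open and `x₀ ∈ U`.  Then there exist an
open neighborhood `W` of `x₀` and `ε > 0` such that the closure of
`(W + γ) ∩ {y : ⟪y - x₀, ξ₀⟫ > -ε}` is compact and contained in `U`. -/
theorem stmt10 {n : ℕ}
    (γ : Set (EuclideanSpace ℝ (Fin n)))
    (hγclosed : IsClosed γ)
    (hγconv : Convex ℝ γ)
    (hγcone : ∀ v ∈ γ, ∀ t : ℝ, 0 ≤ t → t • v ∈ γ)
    (ξ₀ : EuclideanSpace ℝ (Fin n))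
    (hξ₀ : ∀ v ∈ γ, v ≠ 0 → ⟪v, ξ₀⟫ < 0)
    (U : Set (EuclideanSpace ℝ (Fin n))) (hU : IsOpen U)
    (x₀ : EuclideanSpace ℝ (Fin n)) (hx₀ : x₀ ∈ U) :
    ∃ (W : Set (EuclideanSpace ℝ (Fin n))) (ε : ℝ),
      IsOpen W ∧ x₀ ∈ W ∧ 0 < ε ∧
      IsCompact (closure
        ({y : EuclideanSpace ℝ (Fin n) | ∃ w ∈ W, ∃ v ∈ γ, y = w + v} ∩
          {y : EuclideanSpace ℝ (Fin n) | -ε < ⟪y - x₀, ξ₀⟫})) ∧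
      closure
        ({y : EuclideanSpace ℝ (Fin n) | ∃ w ∈ W, ∃ v ∈ γ, y = w + v} ∩
          {y : EuclideanSpace ℝ (Fin n) | -ε < ⟪y - x₀, ξ₀⟫}) ⊆ U := by
  simpa only [← Set.image2_add, Set.image2, eq_comm, ContinuousLinearMap.flip_apply,
    innerSL_apply_apply] using
    stmt10_general (f := (innerSL ℝ).flip ξ₀) hγclosed (fun v hv t ht ↦ hγcone v hv t ht.le) hξ₀
      (hU.mem_nhds hx₀)
end
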